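/- Let G be a graph and M ∈ S(G) a real symmetric positive semidefinite matrix of rank k > 1, i.e. with partial inertia (k,0). Then there exists a real symmetric matrix M′ ∈ S(G) whose partial inertia (r,s) satisfies r < k and s < k. Consequently, for k > 1 the square partition (k,k,…,k) of height k is never the inertial partition of a graph. -/

import Mathlib

open Matrix

/-- Number of positive eigenvalues (with multiplicity) of a real symmetric matrix. -/
noncomputable def posIn {m : ℕ} {A : Matrix (Fin m) (Fin m) ℝ} (hA : A.IsHermitian) : ℕ :=
  Finset.card (Finset.univ.filter fun i => 0 < hA.eigenvalues i)

/-- Number of negative eigenvalues (with multiplicity) of a real symmetric matrix. -/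
noncomputable def negIn {m : ℕ} {A : Matrix (Fin m) (Fin m) ℝ} (hA : A.IsHermitian) : ℕ :=
  Finset.card (Finset.univ.filter fun i => hA.eigenvalues i < 0)

/-- `A` has partial inertia `(r, s)`. -/
def HasInertia {m : ℕ} (A : Matrix (Fin m) (Fin m) ℝ) (r s : ℕ) : Prop :=
  ∃ hA : A.IsHermitian, posIn hA = r ∧ negIn hA = s

/-- `A` is a real symmetric matrix whose off-diagonal zero–nonzero pattern is
given by the edges of the graph `G`. -/
def SMat {m : ℕ} (G : SimpleGraph (Fin m)) (A : Matrix (Fin m) (Fin m) ℝ) : Prop :=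
  A.IsSymm ∧ ∀ i j : Fin m, i ≠ j → (A i j ≠ 0 ↔ G.Adj i j)

open scoped RealInnerProductSpace in
/-- The form `2⟪u,v⟫` restricted to `⟪q,u⟫ = ⟪p,v⟫` with `p ⊥ q` cannot be positive definite on
a space of dimension at least `dim V`. -/
theorem key_pos {V : Type*} [NormedAddCommGroup V] [InnerProductSpace ℝ V] [FiniteDimensional ℝ V]
    {W : Type*} [AddCommGroup W] [Module ℝ W] [FiniteDimensional ℝ W] (p q : V)
    (hpq : inner ℝ p q = 0) (h0 : q - p ≠ 0)
    (u v : W →ₗ[ℝ] V) (huv : ∀ x, inner ℝ q (u x) = inner ℝ p (v x))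
    (hdim : Module.finrank ℝ V ≤ Module.finrank ℝ W)
    (hpos : ∀ x, x ≠ 0 → 0 < inner ℝ (u x) (v x)) : False := by
  have main : ∃ x : W, x ≠ 0 ∧ ∃ c : ℝ, u x + v x = c • (q - p) := by
    by_cases hinj : Function.Injective (u + v)
    · have hle := LinearMap.finrank_le_finrank_of_injective hinj
      have hs := (LinearMap.injective_iff_surjective_of_finrank_eq_finrank
        (le_antisymm hle hdim)).1 hinj
      obtain ⟨x, hx⟩ := hs (q - p)
      refine ⟨x, ?_, 1, by simpa using hx⟩
      rintro rfl
      simp only [map_zero] at hx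
      exact h0 hx.symm
    · have : ∃ x, (u + v) x = 0 ∧ x ≠ 0 := by
        by_contra hcon
        push Not at hcon
        exact hinj ((injective_iff_map_eq_zero _).2 hcon)
      obtain ⟨x, hx, hx0⟩ := this
      exact ⟨x, hx0, 0, by simpa using hx⟩
  obtain ⟨x, hx0, c, hc⟩ := main
  have h1 := hpos x hx0
  have h2 := huv x
  have hu : u x = c • (q - p) - v x := by rw [← hc]; abel
  set y := v x
  rw [hu] at h1 h2
  set d := c • (q - p) - (2 : ℝ) • y with hd
  have hy : y = (1 / 2 : ℝ) • (c • (q - p) - d) := by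
    rw [hd, sub_sub_cancel, smul_smul]; norm_num
  have hcs := real_inner_mul_inner_self_le (p + q) d
  have hN : 0 < inner ℝ (q - p) (q - p) := real_inner_self_pos.2 h0
  rw [hy] at h1 h2
  have hqp : inner ℝ q p = 0 := by rw [real_inner_comm]; exact hpq
  simp only [inner_sub_left, inner_sub_right, inner_smul_left, inner_smul_right, inner_add_left,
    inner_add_right, hpq, hqp, real_inner_comm d, RCLike.conj_to_real] at h1 h2 hcs hN
  rw [real_inner_comm p d, real_inner_comm q d] at *
  generalize inner ℝ d d = dd at *
  generalize inner ℝ p p = pp at *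
  generalize inner ℝ q q = qq at *
  generalize inner ℝ p d = dp at *
  generalize inner ℝ q d = dq at *
  have e1 : c * (pp + qq) = -(dp + dq) := by linarith
  have e2 : dd < c * (c * (pp + qq)) := by linarith
  have hN' : 0 < pp + qq := by linarith
  have e3 : dd * (pp + qq) < (c * (pp + qq)) * (c * (pp + qq)) := by
    calc dd * (pp + qq) < c * (c * (pp + qq)) * (pp + qq) := mul_lt_mul_of_pos_right e2 hN'
      _ = _ := by ring
  rw [e1] at e3
  linarith

theorem exists_good_pair {V : Type*} [NormedAddCommGroup V] [InnerProductSpace ℝ V]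
    [FiniteDimensional ℝ V] (hd : 1 < Module.finrank ℝ V) (a b : V) (hab : inner ℝ a b ≠ 0) :
    ∃ p q : V, p ≠ 0 ∧ inner ℝ p q = 0 ∧
      inner ℝ a p * inner ℝ b q + inner ℝ b p * inner ℝ a q ≠ 0 := by
  have ha : a ≠ 0 := by rintro rfl; simp at hab
  have haa : inner ℝ a a ≠ 0 := (real_inner_self_pos.2 ha).ne'
  obtain ⟨x, hx0, hxa⟩ : ∃ x : V, x ≠ 0 ∧ inner ℝ a x = 0 := by
    have hker : LinearMap.ker (innerₛₗ ℝ a) ≠ ⊥ := by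
      apply LinearMap.ker_ne_bot_of_finrank_lt
      simpa using hd
    obtain ⟨x, hx, hx0⟩ := Submodule.exists_mem_ne_zero_of_ne_bot hker
    exact ⟨x, hx0, by simpa using hx⟩
  have hxa' : inner ℝ x a = 0 := by rw [real_inner_comm]; exact hxa
  by_cases hb : inner ℝ b x = 0
  · have hn : ‖x‖ ≠ 0 := norm_ne_zero_iff.2 hx0
    set t : ℝ := ‖a‖ / ‖x‖ with ht
    have hh : inner ℝ a a - t * (t * inner ℝ x x) = 0 := by
      rw [real_inner_self_eq_norm_sq, real_inner_self_eq_norm_sq, ht]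
      field_simp
      ring
    refine ⟨a + t • x, a - t • x, ?_, ?_, ?_⟩
    · intro h
      have : inner ℝ a (a + t • x) = 0 := by rw [h]; simp
      rw [inner_add_right, inner_smul_right, hxa] at this
      simp at this
      exact ha this
    · simp only [inner_add_left, inner_sub_right, inner_smul_left, inner_smul_right, hxa, hxa',
        RCLike.conj_to_real]
      linarith
    · simp only [inner_add_right, inner_sub_right, inner_smul_right, hxa, hb]
      rw [real_inner_comm a b]
      intro h
      apply mul_ne_zero haa hab
      linarith
  · refine ⟨x, a, hx0, hxa', ?_⟩
    rw [hxa]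
    simpa using ⟨hb, ha⟩

open MvPolynomial in
/-- A generic orthogonal pair works for finitely many edges at once. -/
theorem exists_generic {ι : Type*} [Fintype ι] (hι : 1 < Fintype.card ι) {n : ℕ}
    (a : Fin n → EuclideanSpace ℝ ι) :
    ∃ p q : EuclideanSpace ℝ ι, inner ℝ p q = 0 ∧ ∀ i j, inner ℝ (a i) (a j) ≠ 0 →
      inner ℝ (a i) p * inner ℝ (a j) q + inner ℝ (a j) p * inner ℝ (a i) q ≠ 0 := by
  classical
  let Pp : Fin n → MvPolynomial (ι ⊕ ι) ℝ := fun i => ∑ l, C (a i l) * X (Sum.inl l)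
  let Pz : Fin n → MvPolynomial (ι ⊕ ι) ℝ := fun i => ∑ l, C (a i l) * X (Sum.inr l)
  let N : MvPolynomial (ι ⊕ ι) ℝ := ∑ l, X (Sum.inl l) * X (Sum.inl l)
  let D : MvPolynomial (ι ⊕ ι) ℝ := ∑ l, X (Sum.inl l) * X (Sum.inr l)
  let Pq : Fin n → MvPolynomial (ι ⊕ ι) ℝ := fun i => N * Pz i - D * Pp i
  let F : Fin n × Fin n → MvPolynomial (ι ⊕ ι) ℝ :=
    fun e => Pp e.1 * Pq e.2 + Pp e.2 * Pq e.1
  let Q : EuclideanSpace ℝ ι → EuclideanSpace ℝ ι → EuclideanSpace ℝ ι :=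
    fun p z => (inner ℝ p p) • z - (inner ℝ p z) • p
  have inn : ∀ x y : EuclideanSpace ℝ ι, inner ℝ x y = ∑ l, x l * y l := by
    intro x y
    rw [PiLp.inner_apply]
    exact Finset.sum_congr rfl fun l _ => by simp [mul_comm]
  have hF : ∀ (p z : EuclideanSpace ℝ ι) e, eval (Sum.elim (fun l => p l) (fun l => z l)) (F e) =
      inner ℝ (a e.1) p * inner ℝ (a e.2) (Q p z) + inner ℝ (a e.2) p * inner ℝ (a e.1) (Q p z) := by
    intro p z e
    simp only [F, Pq, Pp, Pz, N, D, Q, map_add, map_mul, map_sub, map_sum, eval_C, eval_X,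
      Sum.elim_inl, Sum.elim_inr, inner_sub_right, inner_smul_right]
    simp only [inn]
  let S : Finset (Fin n × Fin n) := Finset.univ.filter fun e => inner ℝ (a e.1) (a e.2) ≠ 0
  have hprod : (∏ e ∈ S, F e) ≠ 0 := by
    rw [Finset.prod_ne_zero_iff]
    intro e he h0
    have he' : inner ℝ (a e.1) (a e.2) ≠ 0 := (Finset.mem_filter.1 he).2
    obtain ⟨p, q, hp, hpq, hne⟩ := exists_good_pair (by simpa using hι) _ _ he'
    have := hF p q e
    rw [h0, map_zero] at this
    simp only [Q, hpq, zero_smul, sub_zero, inner_smul_right] at this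
    have hpp := (real_inner_self_pos.2 hp).ne'
    apply mul_ne_zero hpp hne
    linarith
  obtain ⟨w, hw⟩ : ∃ w, eval w (∏ e ∈ S, F e) ≠ 0 := by
    by_contra hcon
    push Not at hcon
    exact hprod (MvPolynomial.funext fun w => by rw [hcon w, map_zero])
  let p : EuclideanSpace ℝ ι := WithLp.toLp 2 fun l => w (Sum.inl l)
  let z : EuclideanSpace ℝ ι := WithLp.toLp 2 fun l => w (Sum.inr l)
  have hwe : w = Sum.elim (fun l => p l) (fun l => z l) := by
    funext l; cases l <;> rfl
  refine ⟨p, Q p z, ?_, ?_⟩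
  · simp only [Q, inner_sub_right, inner_smul_right]; ring
  · intro i j hij
    rw [map_prod, Finset.prod_ne_zero_iff] at hw
    have := hw (i, j) (Finset.mem_filter.2 ⟨Finset.mem_univ _, hij⟩)
    rw [hwe, hF] at this
    exact this

/-- The twisted matrix. -/
noncomputable def twist {ι : Type*} [Fintype ι] {n : ℕ} (a : Fin n → EuclideanSpace ℝ ι)
    (p q : EuclideanSpace ℝ ι) : Matrix (Fin n) (Fin n) ℝ :=
  Matrix.of fun i j => inner ℝ (a i) (a j) *
    (inner ℝ (a i) p * inner ℝ (a j) q + inner ℝ (a j) p * inner ℝ (a i) q)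

theorem eig_form {n : ℕ} {A : Matrix (Fin n) (Fin n) ℝ} (hA : A.IsHermitian)
    (P : Fin n → Prop) [DecidablePred P] (c : {i // P i} → ℝ) :
    (∑ i, c i • (hA.eigenvectorBasis i : Fin n → ℝ)) ⬝ᵥ
      (A *ᵥ (∑ i, c i • (hA.eigenvectorBasis i : Fin n → ℝ))) =
      ∑ i : {i // P i}, hA.eigenvalues i * (c i * c i) := by
  have horth : ∀ i j, (hA.eigenvectorBasis i : Fin n → ℝ) ⬝ᵥ (hA.eigenvectorBasis j : Fin n → ℝ)
      = if i = j then 1 else 0 := by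
    intro i j
    have := orthonormal_iff_ite.1 hA.eigenvectorBasis.orthonormal i j
    rw [← this, PiLp.inner_apply]
    exact Finset.sum_congr rfl fun l _ => by simp [mul_comm]
  rw [Matrix.mulVec_sum]
  simp only [Matrix.mulVec_smul, hA.mulVec_eigenvectorBasis, sum_dotProduct, dotProduct_sum,
    smul_dotProduct, dotProduct_smul, horth, smul_eq_mul]
  refine Finset.sum_congr rfl fun i _ => ?_
  rw [Finset.sum_eq_single i]
  · simp; ring
  · intro j _ hj
    rw [if_neg (fun h => hj (Subtype.ext h))]; simp
  · simp

theorem twist_form {ι : Type*} [Fintype ι] {n : ℕ} (a : Fin n → EuclideanSpace ℝ ι)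
    (p q : EuclideanSpace ℝ ι) (x : Fin n → ℝ) :
    x ⬝ᵥ (twist a p q *ᵥ x) = 2 * inner ℝ (∑ i, (x i * inner ℝ (a i) p) • a i)
      (∑ i, (x i * inner ℝ (a i) q) • a i) := by
  simp only [sum_inner, inner_sum, inner_smul_left, inner_smul_right, RCLike.conj_to_real,
    dotProduct, Matrix.mulVec, twist, Matrix.of_apply, Finset.mul_sum]
  have h : ∀ i j : Fin n, x i * (inner ℝ (a i) (a j) *
    (inner ℝ (a i) p * inner ℝ (a j) q + inner ℝ (a j) p * inner ℝ (a i) q) * x j) =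
      (x i * inner ℝ (a i) p) * ((x j * inner ℝ (a j) q) * inner ℝ (a i) (a j)) +
      (x j * inner ℝ (a j) p) * ((x i * inner ℝ (a i) q) * inner ℝ (a j) (a i)) := by
    intro i j
    rw [real_inner_comm (a i) (a j)]; ring
  simp only [h, Finset.sum_add_distrib]
  rw [Finset.sum_comm (f := fun i j => (x i * inner ℝ (a i) p) * ((x j * inner ℝ (a j) q) *
    inner ℝ (a i) (a j))), ← Finset.sum_add_distrib]
  refine Finset.sum_congr rfl fun i _ => ?_
  rw [← Finset.sum_add_distrib]
  refine Finset.sum_congr rfl fun j _ => ?_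
  ring

/-- A subspace on which the twisted form is positive has dimension less than `card ι`. -/
theorem twist_pos {ι : Type*} [Fintype ι] (hι : 0 < Fintype.card ι) {n : ℕ}
    (a : Fin n → EuclideanSpace ℝ ι)
    (p q : EuclideanSpace ℝ ι) (hpq : inner ℝ p q = 0)
    {W : Type*} [AddCommGroup W] [Module ℝ W] [FiniteDimensional ℝ W]
    (T : W →ₗ[ℝ] (Fin n → ℝ))
    (hpos : ∀ c, c ≠ 0 → 0 < T c ⬝ᵥ (twist a p q *ᵥ T c)) :
    Module.finrank ℝ W < Fintype.card ι := by
  by_contra hcon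
  push Not at hcon
  let u : EuclideanSpace ℝ ι → ((Fin n → ℝ) →ₗ[ℝ] EuclideanSpace ℝ ι) := fun p =>
    ∑ i, (LinearMap.proj i).smulRight ((inner ℝ (a i) p) • a i)
  have hu : ∀ p x, u p x = ∑ i, (x i * inner ℝ (a i) p) • a i := by
    intro p x
    simp [u, LinearMap.sum_apply, smul_smul]
  have hpos' : ∀ c, c ≠ 0 → 0 < inner ℝ (((u p).comp T) c) (((u q).comp T) c) := by
    intro c hc
    have := hpos c hc
    rw [twist_form, ← hu, ← hu] at this
    simp only [LinearMap.comp_apply]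
    linarith
  by_cases h0 : q - p = 0
  · have h1 : q = p := sub_eq_zero.1 h0
    rw [h1] at hpq hpos'
    have h2 : p = 0 := inner_self_eq_zero.1 hpq
    have : Nontrivial W := Module.nontrivial_of_finrank_pos (R := ℝ) (by omega)
    obtain ⟨c, hc⟩ := exists_ne (0 : W)
    have := hpos' c hc
    rw [LinearMap.comp_apply, hu, h2] at this
    simp at this
  · refine key_pos p q hpq h0 ((u p).comp T) ((u q).comp T) ?_ (by simpa using hcon) hpos'
    intro c
    simp only [LinearMap.comp_apply, hu, inner_sum, inner_smul_right]
    refine Finset.sum_congr rfl fun i _ => ?_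
    rw [real_inner_comm (a i) p, real_inner_comm (a i) q]; ring

theorem exists_factor {n k : ℕ} (M : Matrix (Fin n) (Fin n) ℝ) (hpsd : M.PosSemidef)
    (hin : posIn hpsd.isHermitian = k) :
    ∃ (ι : Type) (_ : Fintype ι), Fintype.card ι = k ∧
      ∃ a : Fin n → EuclideanSpace ℝ ι, ∀ i j, M i j = inner ℝ (a i) (a j) := by
  classical
  let hA := hpsd.isHermitian
  refine ⟨{i // 0 < hA.eigenvalues i}, inferInstance, ?_, ?_⟩
  · rw [Fintype.card_subtype]; exact hin
  refine ⟨fun i => WithLp.toLp 2 fun l => Real.sqrt (hA.eigenvalues l) * hA.eigenvectorBasis l i, ?_⟩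
  intro i j
  have h1 : M i j = ∑ l, hA.eigenvalues l *
      (hA.eigenvectorBasis l i * hA.eigenvectorBasis l j) := by
    conv_lhs => rw [hA.spectral_theorem]
    simp only [Unitary.conjStarAlgAut_apply, Matrix.mul_apply, Matrix.diagonal_apply]
    simp [Matrix.star_apply, Matrix.IsHermitian.eigenvectorUnitary_apply]
    refine Finset.sum_congr rfl fun l _ => ?_
    ring
  rw [h1, PiLp.inner_apply]
  have h2 : ∀ l : {l // 0 < hA.eigenvalues l},
      inner ℝ (Real.sqrt (hA.eigenvalues l) * hA.eigenvectorBasis l i)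
      (Real.sqrt (hA.eigenvalues l) * hA.eigenvectorBasis l j) =
      hA.eigenvalues l * (hA.eigenvectorBasis l i * hA.eigenvectorBasis l j) := by
    intro l
    have := Real.mul_self_sqrt l.2.le
    simp only [RCLike.inner_apply, RCLike.conj_to_real]
    linear_combination (hA.eigenvectorBasis l i * hA.eigenvectorBasis l j) * this
  simp only [h2]
  rw [← Finset.sum_subtype (Finset.univ.filter fun l => 0 < hA.eigenvalues l) (by simp)
    (fun l => hA.eigenvalues l * (hA.eigenvectorBasis l i * hA.eigenvectorBasis l j))]
  symm
  apply Finset.sum_subset (Finset.subset_univ _)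
  intro l _ hl
  have h3 : ¬ 0 < hA.eigenvalues l := by simpa using hl
  have h4 : hA.eigenvalues l = 0 := le_antisymm (not_lt.1 h3) (hpsd.eigenvalues_nonneg l)
  rw [h4, zero_mul]

theorem twist_inertia {ι : Type*} [Fintype ι] (hι : 0 < Fintype.card ι) {n : ℕ}
    (a : Fin n → EuclideanSpace ℝ ι)
    (p q : EuclideanSpace ℝ ι) (hpq : inner ℝ p q = 0) (hA : (twist a p q).IsHermitian) :
    posIn hA < Fintype.card ι ∧ negIn hA < Fintype.card ι := by
  classical
  let T : (P : Fin n → Prop) → [DecidablePred P] → (({i // P i} → ℝ) →ₗ[ℝ] (Fin n → ℝ)) :=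
    fun P _ => ∑ i : {i // P i}, (LinearMap.proj i).smulRight (hA.eigenvectorBasis i : Fin n → ℝ)
  have hT : ∀ (P : Fin n → Prop) [DecidablePred P] c,
      T P c = ∑ i, c i • (hA.eigenvectorBasis i : Fin n → ℝ) := by
    intro P _ c
    simp [T, LinearMap.sum_apply]
  constructor
  · have := twist_pos hι a p q hpq (T fun i => 0 < hA.eigenvalues i) (by
      intro c hc
      rw [hT, eig_form]
      obtain ⟨i, hi⟩ := Function.ne_iff.1 hc
      refine Finset.sum_pos' (fun j _ => mul_nonneg j.2.le (mul_self_nonneg _))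
        ⟨i, Finset.mem_univ _, mul_pos i.2 (mul_self_pos.2 hi)⟩)
    rw [Module.finrank_fintype_fun_eq_card, Fintype.card_subtype] at this
    exact this
  · have hneg : twist a p (-q) = - twist a p q := by
      ext i j
      simp [twist]; ring
    have := twist_pos hι a p (-q) (by simpa using hpq) (T fun i => hA.eigenvalues i < 0) (by
      intro c hc
      rw [hneg, Matrix.neg_mulVec, dotProduct_neg, hT, eig_form, ← Finset.sum_neg_distrib]
      obtain ⟨i, hi⟩ := Function.ne_iff.1 hc
      refine Finset.sum_pos' (fun j _ => ?_) ⟨i, Finset.mem_univ _, ?_⟩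
      · rw [← neg_mul]
        exact mul_nonneg (neg_pos.2 j.2).le (mul_self_nonneg _)
      · rw [← neg_mul]
        exact mul_pos (neg_pos.2 i.2) (mul_self_pos.2 hi))
    rw [Module.finrank_fintype_fun_eq_card, Fintype.card_subtype] at this
    exact this

/-- If S(G) contains a positive semidefinite matrix of rank k > 1 (partial
inertia (k,0)), then S(G) contains a matrix whose partial inertia (r,s)
satisfies r < k and s < k. -/
theorem stmt19 {n : ℕ} (G : SimpleGraph (Fin n)) (k : ℕ) (hk : 1 < k)
    (M : Matrix (Fin n) (Fin n) ℝ) (hM : SMat G M) (hpsd : M.PosSemidef)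
    (hrank : M.rank = k) (hin : HasInertia M k 0) :
    ∃ M' : Matrix (Fin n) (Fin n) ℝ, SMat G M' ∧
      ∃ r s : ℕ, HasInertia M' r s ∧ r < k ∧ s < k := by
  obtain ⟨hA, hp, -⟩ := hin
  obtain ⟨ι, _, hcard, a, ha⟩ := exists_factor M hpsd hp
  obtain ⟨p, q, hpq, hne⟩ := exists_generic (by omega) a
  have hsymm : (twist a p q).IsSymm := by
    ext i j
    simp only [twist, Matrix.transpose_apply, Matrix.of_apply]
    rw [real_inner_comm (a j) (a i)]; ring
  have hH : (twist a p q).IsHermitian := by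
    rw [Matrix.IsHermitian, Matrix.conjTranspose_eq_transpose_of_trivial]; exact hsymm
  have hI := twist_inertia (by omega) a p q hpq hH
  rw [hcard] at hI
  refine ⟨twist a p q, ⟨hsymm, ?_⟩, posIn hH, negIn hH, ⟨hH, rfl, rfl⟩, hI.1, hI.2⟩
  intro i j hij
  rw [← hM.2 i j hij, ha]
  simp only [twist, Matrix.of_apply]
  exact ⟨fun h => left_ne_zero_of_mul h, fun h => mul_ne_zero h (hne i j h)⟩
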